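/- arXiv:2506.04921 — 5 statements merged into one kernel-verified Lean document; each statement's English description precedes it below -/
import Mathlib

section
/- Let y : [0, α] → ℝ be differentiable with y(0) = 0 and y(s) ∈ [0, b] for all s, satisfying the ODE y'(s) = ∑_{d=1}^{D} (1 − exp(−a_d (b − y(s)))) Q_d for all s ∈ [0, α]. Set ỹ(s) = b − b·exp(−L s). Then for every s ∈ [0, α], 0 ≤ ỹ(s) − y(s) ≤ (J/L)·(1 − exp(−L s)); in particular |y(s) − ỹ(s)| ≤ (J/L)(1 − exp(−L s)). -/
open Real

lemma aux_exp_neg_le (x : ℝ) (hx : 0 ≤ x) : Real.exp (-x) ≤ 1 - x + x ^ 2 / 2 := by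
  have h := Real.quadratic_le_exp_of_nonneg hx
  have h1 : Real.exp (-x) * Real.exp x = 1 := by rw [← Real.exp_add]; simp
  have hp := Real.exp_pos (-x)
  have hq : 0 < 1 - x + x ^ 2 / 2 := by nlinarith [sq_nonneg (x - 1)]
  have h2 : Real.exp (-x) * (1 + x + x ^ 2 / 2) ≤ 1 := by
    have := mul_le_mul_of_nonneg_left h hp.le
    linarith
  have h3 : 1 ≤ (1 - x + x ^ 2 / 2) * (1 + x + x ^ 2 / 2) := by
    nlinarith [sq_nonneg (x ^ 2)]
  have h4 : 0 < 1 + x + x ^ 2 / 2 := by positivity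
  exact le_of_mul_le_mul_right (h2.trans h3) h4

/-- Fluid-limit ODE approximation error bound for the Myopic matching policy
(Theorem 1, deterministic approximation part). -/
theorem myopic_ode_approx
    (D : ℕ) (hD : 1 ≤ D) (a Q : Fin D → ℝ)
    (ha : ∀ d, 0 ≤ a d) (hQ : ∀ d, 0 ≤ Q d)
    (b α : ℝ) (hb : 0 < b) (hα : 0 < α)
    (L J : ℝ)
    (hL : L = ∑ d, a d * Q d)
    (hJ : J = b ^ 2 / 2 * ∑ d, (a d) ^ 2 * Q d)
    (hLpos : 0 < L)
    (y : ℝ → ℝ)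
    (hy0 : y 0 = 0)
    (hyrange : ∀ s ∈ Set.Icc (0 : ℝ) α, y s ∈ Set.Icc (0 : ℝ) b)
    (hODE : ∀ s ∈ Set.Icc (0 : ℝ) α,
      HasDerivAt y (∑ d, (1 - Real.exp (-(a d) * (b - y s))) * Q d) s) :
    ∀ s ∈ Set.Icc (0 : ℝ) α,
      0 ≤ (b - b * Real.exp (-L * s)) - y s ∧
      (b - b * Real.exp (-L * s)) - y s ≤ J / L * (1 - Real.exp (-L * s)) ∧
      |y s - (b - b * Real.exp (-L * s))| ≤ J / L * (1 - Real.exp (-L * s)) := by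
  have hE : ∀ s : ℝ, HasDerivAt (fun s => Real.exp (L * s)) (Real.exp (L * s) * L) s := by
    intro s
    have := ((hasDerivAt_id s).const_mul L).exp
    simpa using this
  have hup : ∀ s ∈ Set.Icc (0 : ℝ) α,
      ∑ d, (1 - Real.exp (-(a d) * (b - y s))) * Q d ≤ L * (b - y s) := by
    intro s hs
    rw [hL, Finset.sum_mul]
    refine Finset.sum_le_sum fun d _ => ?_
    have := Real.add_one_le_exp (-(a d) * (b - y s))
    nlinarith [hQ d]
  have hlo : ∀ s ∈ Set.Icc (0 : ℝ) α,
      L * (b - y s) - ∑ d, (1 - Real.exp (-(a d) * (b - y s))) * Q d ≤ J := by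
    intro s hs
    obtain ⟨h0, h1⟩ := hyrange s hs
    rw [hL, hJ, Finset.sum_mul, Finset.mul_sum, ← Finset.sum_sub_distrib]
    refine Finset.sum_le_sum fun d _ => ?_
    have h := aux_exp_neg_le (a d * (b - y s)) (mul_nonneg (ha d) (by linarith))
    rw [← neg_mul] at h
    have h2 : (a d * (b - y s)) ^ 2 ≤ (a d * b) ^ 2 :=
      pow_le_pow_left₀ (mul_nonneg (ha d) (by linarith))
        (mul_le_mul_of_nonneg_left (by linarith) (ha d)) 2
    have h3 : a d * (b - y s) - (1 - Real.exp (-(a d) * (b - y s))) ≤ (a d * b) ^ 2 / 2 := by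
      linarith
    have := mul_le_mul_of_nonneg_right h3 (hQ d)
    linarith
  have hu : ∀ s ∈ Set.Icc (0 : ℝ) α, HasDerivAt (fun s => (b - y s) * Real.exp (L * s))
      (Real.exp (L * s) *
        (L * (b - y s) - ∑ d, (1 - Real.exp (-(a d) * (b - y s))) * Q d)) s := by
    intro s hs
    have h := ((hODE s hs).const_sub b).mul (hE s)
    refine HasDerivAt.congr_deriv h ?_
    ring
  have hv : ∀ s ∈ Set.Icc (0 : ℝ) α,
      HasDerivAt (fun s => (b - y s) * Real.exp (L * s) - J / L * Real.exp (L * s))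
      (Real.exp (L * s) *
        (L * (b - y s) - ∑ d, (1 - Real.exp (-(a d) * (b - y s))) * Q d - J)) s := by
    intro s hs
    have h := (hu s hs).sub ((hE s).const_mul (J / L))
    refine HasDerivAt.congr_deriv h ?_
    have hJL : J / L * L = J := div_mul_cancel₀ J hLpos.ne'
    linear_combination (-Real.exp (L * s)) * hJL
  have hmono : MonotoneOn (fun s => (b - y s) * Real.exp (L * s)) (Set.Icc 0 α) := by
    refine monotoneOn_of_deriv_nonneg (convex_Icc 0 α)
      (fun s hs => (hu s hs).continuousAt.continuousWithinAt)
      (fun s hs => (hu s (interior_subset hs)).differentiableAt.differentiableWithinAt) ?_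
    intro s hs
    have hs' := interior_subset hs
    rw [(hu s hs').deriv]
    exact mul_nonneg (Real.exp_pos _).le (by linarith [hup s hs'])
  have hanti : AntitoneOn
      (fun s => (b - y s) * Real.exp (L * s) - J / L * Real.exp (L * s)) (Set.Icc 0 α) := by
    refine antitoneOn_of_deriv_nonpos (convex_Icc 0 α)
      (fun s hs => (hv s hs).continuousAt.continuousWithinAt)
      (fun s hs => (hv s (interior_subset hs)).differentiableAt.differentiableWithinAt) ?_
    intro s hs
    have hs' := interior_subset hs
    rw [(hv s hs').deriv]
    exact mul_nonpos_of_nonneg_of_nonpos (Real.exp_pos _).le (by linarith [hlo s hs'])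
  intro s hs
  have h0 : (0 : ℝ) ∈ Set.Icc 0 α := ⟨le_rfl, hα.le⟩
  have m := hmono h0 hs hs.1
  have n := hanti h0 hs hs.1
  simp only [hy0, mul_zero, Real.exp_zero, sub_zero, mul_one] at m n
  have hp := Real.exp_pos (-L * s)
  have h1 : Real.exp (L * s) * Real.exp (-L * s) = 1 := by rw [← Real.exp_add]; simp
  have m' := mul_le_mul_of_nonneg_right m hp.le
  have n' := mul_le_mul_of_nonneg_right n hp.le
  rw [mul_assoc, h1] at m'
  rw [sub_mul, mul_assoc, mul_assoc, h1] at n'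
  have A : 0 ≤ (b - b * Real.exp (-L * s)) - y s := by linarith
  have B : (b - b * Real.exp (-L * s)) - y s ≤ J / L * (1 - Real.exp (-L * s)) := by
    linarith
  refine ⟨A, B, ?_⟩
  rw [abs_sub_comm, abs_of_nonneg A]
  exact B
end

section
/- Let y : [0, α] → ℝ be differentiable with y(0) = 0 and y'(s) = ∑_{d=1}^{D} (1 − exp(−a_d (b − y(s)))) Q_d for all s ∈ [0, α]. Then for every s ∈ [0, α], 0 ≤ y(s) ≤ b. -/
/-- The interval [0, b] is invariant for the fluid-limit ODE of the
Myopic matching policy. -/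
theorem myopic_ode_invariance
    (D : ℕ) (hD : 1 ≤ D) (a Q : Fin D → ℝ)
    (ha : ∀ d, 0 ≤ a d) (hQ : ∀ d, 0 ≤ Q d)
    (b α : ℝ) (hb : 0 ≤ b) (hα : 0 < α)
    (y : ℝ → ℝ)
    (hy0 : y 0 = 0)
    (hODE : ∀ s ∈ Set.Icc (0 : ℝ) α,
      HasDerivAt y (∑ d, (1 - Real.exp (-(a d) * (b - y s))) * Q d) s) :
    ∀ s ∈ Set.Icc (0 : ℝ) α, 0 ≤ y s ∧ y s ≤ b := by
  have hcont : ContinuousOn y (Set.Icc 0 α) :=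
    fun s hs => (hODE s hs).continuousAt.continuousWithinAt
  have hupper : ∀ s ∈ Set.Icc (0 : ℝ) α, y s ≤ b := by
    intro s hs
    have key : ∀ ε : ℝ, 0 < ε → y s ≤ b + ε * (1 + s) := by
      intro ε hε
      refine image_le_of_deriv_right_lt_deriv_boundary (f := y) (a := 0) (b := α)
        (f' := fun s => ∑ d, (1 - Real.exp (-(a d) * (b - y s))) * Q d)
        (B := fun x => b + ε * (1 + x)) (B' := fun _ => ε) hcont
        (fun x hx => (hODE x ⟨hx.1, hx.2.le⟩).hasDerivWithinAt) ?_ ?_ ?_ hs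
      · simp only [hy0]; nlinarith
      · intro x
        simpa using (((hasDerivAt_id x).const_add 1).const_mul ε).const_add b
      · intro x hx h
        refine lt_of_le_of_lt (Finset.sum_nonpos fun d _ => ?_) hε
        refine mul_nonpos_of_nonpos_of_nonneg ?_ (hQ d)
        have h1 : 0 ≤ y x - b := by
          rw [h]; have := mul_nonneg hε.le (by linarith [hx.1] : (0:ℝ) ≤ 1 + x); linarith
        have h2 : 0 ≤ -(a d) * (b - y x) := by nlinarith [mul_nonneg (ha d) h1]
        linarith [Real.one_le_exp h2]
    refine le_of_forall_pos_le_add fun δ hδ => ?_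
    have hs1 : 0 < 1 + s := by linarith [hs.1]
    have := key (δ / (1 + s)) (by positivity)
    rwa [div_mul_cancel₀ _ hs1.ne'] at this
  have hmono : MonotoneOn y (Set.Icc 0 α) := by
    refine monotoneOn_of_deriv_nonneg (convex_Icc 0 α) hcont ?_ ?_
    · intro x hx
      exact (hODE x (interior_subset hx)).differentiableAt.differentiableWithinAt
    · intro x hx
      have hx' := interior_subset hx
      rw [(hODE x hx').deriv]
      refine Finset.sum_nonneg fun d _ => mul_nonneg ?_ (hQ d)
      have h2 : -(a d) * (b - y x) ≤ 0 := by
        nlinarith [mul_nonneg (ha d) (sub_nonneg.2 (hupper x hx'))]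
      linarith [Real.exp_le_one_iff.2 h2]
  intro s hs
  refine ⟨?_, hupper s hs⟩
  rw [← hy0]
  exact hmono ⟨le_rfl, hα.le⟩ hs hs.1
end

section
/- Let a > 0, b > 0 and s > 0 be real numbers. The function y(t) = b − (1/a)·log(1 + (exp(a b) − 1)·exp(−a s t)) satisfies y(0) = 0 and y'(t) = s·(1 − exp(−a (b − y(t)))) for all t ≥ 0. In other words, when all the coefficients a_d are equal to a common value a (the Erdős–Rényi case), the fluid-limit ODE of the Myopic policy admits this closed-form solution. -/
/-- Closed-form solution of the fluid-limit ODE of the Myopic policy in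
the Erdős–Rényi case. -/
theorem myopic_ode_erdos_renyi_closed_form
    (a b s : ℝ) (ha : 0 < a) (hb : 0 < b) (hs : 0 < s) :
    (fun t : ℝ => b - (1 / a) * Real.log (1 + (Real.exp (a * b) - 1) * Real.exp (-a * s * t))) 0 = 0 ∧
    ∀ t : ℝ, 0 ≤ t →
      HasDerivAt
        (fun t : ℝ => b - (1 / a) * Real.log (1 + (Real.exp (a * b) - 1) * Real.exp (-a * s * t)))
        (s * (1 - Real.exp (-a * (b -
          (b - (1 / a) * Real.log (1 + (Real.exp (a * b) - 1) * Real.exp (-a * s * t)))))))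
        t := by
  have hab : 0 < a * b := mul_pos ha hb
  have hC : 0 < Real.exp (a * b) - 1 := by
    have := Real.add_one_lt_exp hab.ne'
    linarith
  refine ⟨?_, ?_⟩
  · simp
    field_simp
    ring
  · intro t _
    have hu : 0 < 1 + (Real.exp (a * b) - 1) * Real.exp (-a * s * t) := by positivity
    have h1 : HasDerivAt (fun t : ℝ => -a * s * t) (-a * s * 1) t :=
      (hasDerivAt_id' t).const_mul (-a * s)
    have h2 := (((((h1.exp).const_mul (Real.exp (a * b) - 1)).const_add 1).log
      hu.ne').const_mul (1 / a)).const_sub b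
    refine h2.congr_deriv ?_
    have e : -a * (b - (b - (1 / a) * Real.log (1 + (Real.exp (a * b) - 1) * Real.exp (-a * s * t))))
        = -Real.log (1 + (Real.exp (a * b) - 1) * Real.exp (-a * s * t)) := by
      field_simp
      ring
    rw [e, Real.exp_neg, Real.exp_log hu]
    generalize Real.exp (-a * s * t) = E at *
    generalize Real.exp (a * b) - 1 = C at *
    have := hu.ne'
    field_simp
    ring
end

section
/- For every real n > 0, every real a with 0 ≤ a ≤ n/2, and every real w with 0 ≤ w ≤ 1: 0 ≤ exp(−a w) − (1 − a/n)^{n w} ≤ a/(n e), where the power is the real power with base 1 − a/n > 0 and e is Euler's number. -/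
/-- Technical inequality comparing exp(-aw) with (1 - a/n)^(nw) (Lemma B.3). -/
theorem exp_sub_rpow_bound
    (n a w : ℝ) (hn : 0 < n) (ha0 : 0 ≤ a) (ha : a ≤ n / 2)
    (hw0 : 0 ≤ w) (hw1 : w ≤ 1) :
    0 ≤ Real.exp (-(a * w)) - (1 - a / n) ^ (n * w) ∧
    Real.exp (-(a * w)) - (1 - a / n) ^ (n * w) ≤ a / (n * Real.exp 1) := by
  obtain ⟨x, hx⟩ : ∃ x, x = a / n := ⟨_, rfl⟩
  obtain ⟨t, ht⟩ : ∃ t, t = n * w := ⟨_, rfl⟩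
  have hx0 : 0 ≤ x := by rw [hx]; positivity
  have hx2 : x ≤ 1 / 2 := by rw [hx, div_le_iff₀ hn]; linarith
  have ht0 : 0 ≤ t := by rw [ht]; positivity
  have e1 : a * w = x * t := by rw [hx, ht]; field_simp
  have e2 : a / (n * Real.exp 1) = x * Real.exp (-1) := by
    rw [hx, Real.exp_neg]; field_simp
  rw [e1, e2, ← hx, ← ht]
  have hpos : 0 < 1 - x := by linarith
  rw [Real.rpow_def_of_pos hpos]
  have hlog1 : Real.log (1 - x) ≤ -x := by
    have := Real.log_le_sub_one_of_pos hpos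
    linarith
  have hlog2 : -(x + x ^ 2) ≤ Real.log (1 - x) := by
    rw [Real.le_log_iff_exp_le hpos, Real.exp_neg]
    apply inv_le_of_inv_le₀ hpos
    refine le_trans ?_ (Real.quadratic_le_exp_of_nonneg (by positivity : 0 ≤ x + x ^ 2))
    rw [inv_le_iff_one_le_mul₀' hpos]
    have h2 : x ^ 2 ≤ 1 / 4 := by nlinarith
    have h3 : x ^ 3 ≤ 1 / 8 := by nlinarith
    have : 0 ≤ x ^ 2 * (1 - x - x ^ 2 - x ^ 3) :=
      mul_nonneg (sq_nonneg x) (by linarith)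
    nlinarith
  constructor
  · rw [sub_nonneg, Real.exp_le_exp]
    nlinarith
  · have h1 : Real.exp (-(x * t)) * (1 - x ^ 2 * t) ≤ Real.exp (Real.log (1 - x) * t) := by
      calc _ ≤ Real.exp (-(x * t)) * Real.exp (-(x ^ 2 * t)) := by
            gcongr
            linarith [Real.add_one_le_exp (-(x ^ 2 * t))]
        _ ≤ _ := by
            rw [← Real.exp_add, Real.exp_le_exp]
            nlinarith
    have h2 : x * t * Real.exp (-(x * t)) ≤ Real.exp (-1) := by
      calc _ ≤ Real.exp (x * t - 1) * Real.exp (-(x * t)) := by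
            gcongr
            linarith [Real.add_one_le_exp (x * t - 1)]
        _ = _ := by rw [← Real.exp_add]; congr 1; ring
    have h3 := mul_le_mul_of_nonneg_left h2 hx0
    nlinarith
end

section
/- Let m be a real number with 0 ≤ b − m/N ≤ 1 and m ≤ N b. Then |∑_{d=1}^{D} ((1 − a_d/N)^{N b − m} − exp(−a_d (b − m/N))) w_d| ≤ ∑_{d=1}^{D} (a_d/(N e)) w_d, where the powers are real powers with base 1 − a_d/N > 0. -/
lemma aux_base (x : ℝ) (h0 : 0 ≤ x) (h1 : x ≤ 1/2) : Real.exp (-(x + x^2)) ≤ 1 - x := by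
  have hq := Real.quadratic_le_exp_of_nonneg (x := x + x^2) (by positivity)
  rw [Real.exp_neg]
  apply inv_le_of_inv_le₀ (by linarith)
  refine le_trans ?_ hq
  rw [inv_le_iff_one_le_mul₀ (by linarith)]
  have h2 : 0 ≤ (1-x)*(1+x)^2 - 2*x := by
    nlinarith [mul_nonneg h0 (sub_nonneg.2 h1), mul_nonneg h0 (mul_nonneg h0 (sub_nonneg.2 h1))]
  nlinarith [mul_nonneg (sq_nonneg x) h2]

lemma aux_term (x s : ℝ) (h0 : 0 ≤ x) (h1 : x ≤ 1/2) (hs : 0 ≤ s) :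
    |(1 - x) ^ s - Real.exp (-(x * s))| ≤ x / Real.exp 1 := by
  have hup : (1 - x) ^ s ≤ Real.exp (-(x * s)) := by
    have h := Real.rpow_le_rpow (by linarith) (Real.one_sub_le_exp_neg x) hs
    rwa [← Real.exp_mul, neg_mul] at h
  have hlo : Real.exp (-(x * s)) * Real.exp (-(x^2 * s)) ≤ (1 - x) ^ s := by
    have h := Real.rpow_le_rpow (Real.exp_pos _).le (aux_base x h0 h1) hs
    rw [← Real.exp_mul] at h
    rw [← Real.exp_add]
    convert h using 2
    ring
  rw [abs_sub_comm, abs_of_nonneg (by linarith)]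
  have h3 := Real.one_sub_le_exp_neg (x^2 * s)
  have h4 := mul_le_mul_of_nonneg_left h3 (Real.exp_pos (-(x*s))).le
  have h5 : x * s * Real.exp (-(x*s)) ≤ Real.exp (-1) := by
    have h := Real.add_one_le_exp (x*s - 1)
    have h' := mul_le_mul_of_nonneg_right h (Real.exp_pos (-(x*s))).le
    rw [← Real.exp_add] at h'
    ring_nf at h' ⊢
    exact h'
  have h6 := mul_le_mul_of_nonneg_left h5 h0
  rw [div_eq_mul_inv, ← Real.exp_neg]
  nlinarith

/-- Bound on the distance between the exact expected one-step matching gain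
and its exponential fluid limit (Lemma B.5). -/
theorem drift_fluid_limit_distance
    (D : ℕ) (hD : 1 ≤ D) (N b : ℝ) (hN : 0 < N) (hb : 0 < b)
    (a w : Fin D → ℝ)
    (ha0 : ∀ d, 0 ≤ a d) (ha : ∀ d, a d ≤ N / 2) (hw : ∀ d, 0 ≤ w d)
    (m : ℝ) (hm0 : 0 ≤ b - m / N) (hm1 : b - m / N ≤ 1) (hmb : m ≤ N * b) :
    |∑ d, ((1 - a d / N) ^ (N * b - m) - Real.exp (-(a d) * (b - m / N))) * w d|
      ≤ ∑ d, a d / (N * Real.exp 1) * w d := by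
  refine (Finset.abs_sum_le_sum_abs _ _).trans (Finset.sum_le_sum fun d _ => ?_)
  rw [abs_mul, abs_of_nonneg (hw d)]
  refine mul_le_mul_of_nonneg_right ?_ (hw d)
  have h := aux_term (a d / N) (N * b - m) (div_nonneg (ha0 d) hN.le)
    (by rw [div_le_iff₀ hN]; linarith [ha d]) (by linarith)
  have e : -(a d) * (b - m / N) = -(a d / N * (N * b - m)) := by
    field_simp
  rw [e, ← div_div]
  exact h
end
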